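/- Let n be a positive odd integer and d a positive integer with gcd(n,d)=1. Let r be an integer with n−dn+d ≤ r ≤ n and n ≡ r (mod d). Then, modulo Φ_n(−q)^3 Φ_n(q)^2, one has Σ_{k=0}^{(n−r)/d} (−1)^k · (1+q^{2dk+r})(q^{2r};q^{2d})_k^2 / ((1+q^r)(q^{2d};q^{2d})_k^2) · q^{dk^2+k(d−r)} ≡ (−1)^{(n−r)/d} · ([n]_{q^2}/[r]_{q^2}) · q^{(n−r)(n+r−d)/d} · Σ_{k=0}^{(n−r)/d} (q^{2r};q^{2d})_k (q^r;q^{2d})_k / ((q^{2d};q^{2d})_k (q^{2d+r};q^{2d})_k) · q^{2k(d−r)}. -/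

import Mathlib

open Finset Polynomial

/-- The q-shifted factorial `(x; q)_k = ∏_{j=0}^{k-1} (1 - x q^j)`. -/
noncomputable def qPoch (x q : RatFunc ℚ) (k : ℕ) : RatFunc ℚ :=
  ∏ j ∈ Finset.range k, (1 - x * q ^ j)

/-- The q-integer `[m]_q = (1 - q^m)/(1 - q)` (with integer `m`). -/
noncomputable def qInt (q : RatFunc ℚ) (m : ℤ) : RatFunc ℚ :=
  (1 - q ^ m) / (1 - q)

/-
Write `p = q^{2d}`, `s = q^r`, `y = q^n` and `N = (n - r) / d`, so that `s p^{N/2} = y`. Replace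
`(s²; p)_k²` and `(p; p)_k²` by `(s² x, s² / x; p)_k` and `(p x, p / x; p)_k`. Cleared of
denominators, the difference of the two sides is then a polynomial in `u = x + 1 / x`.

It vanishes at `x = y²`, where `s² / x = p⁻ᴺ`, by Watson's transformation. It is divisible by
`Φ_n(-q)` as a polynomial in `u`, because `y ≡ -1` modulo `Φ_n(-q)`: there the terms of index `k`
and `N - k` of the left-hand series are opposite, while every term of the right-hand series carries
a factor `(1 - y²) / (1 - s pᵏ)`. At `x = 1`, that is `u = 2`, the difference is therefore divisible
by `Φ_n(-q) (2 - y² - y⁻²) = -Φ_n(-q) (1 - y²)² y⁻²`, and `1 - y²` is divisible by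
`Φ_n(-q) Φ_n(q)`.
-/

/-- The `q`-shifted factorial `(x; q)_k` over an arbitrary commutative ring. -/
def qPochhammer {R : Type*} [CommRing R] (x q : R) (k : ℕ) : R :=
  ∏ j ∈ range k, (1 - x * q ^ j)

section qPochhammer

variable {R : Type*} [CommRing R] (x q : R)

lemma qPochhammer_zero : qPochhammer x q 0 = 1 := prod_range_zero _

lemma qPochhammer_succ (k : ℕ) :
    qPochhammer x q (k + 1) = qPochhammer x q k * (1 - x * q ^ k) :=
  prod_range_succ _ _

lemma qPochhammer_add (j k : ℕ) :
    qPochhammer x q (j + k) = qPochhammer x q j * qPochhammer (x * q ^ j) q k := by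
  simp only [qPochhammer, prod_range_add, pow_add, mul_assoc]

lemma qPochhammer_succ' (k : ℕ) :
    qPochhammer x q (k + 1) = (1 - x) * qPochhammer (x * q) q k := by
  rw [add_comm, qPochhammer_add, qPochhammer_succ, qPochhammer_zero, pow_zero, pow_one, one_mul,
    mul_one]

lemma one_sub_mul_qPochhammer_mul (k : ℕ) :
    (1 - x) * qPochhammer (x * q) q k = qPochhammer x q k * (1 - x * q ^ k) := by
  rw [← qPochhammer_succ', qPochhammer_succ]

lemma qPochhammer_ne_zero [IsDomain R] {x q : R} {k : ℕ} (h : ∀ j < k, x * q ^ j ≠ 1) :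
    qPochhammer x q k ≠ 0 :=
  prod_ne_zero_iff.2 fun j hj => sub_ne_zero.2 (h j (mem_range.1 hj)).symm

lemma qPochhammer_inv_mul_succ {K : Type*} [Field K] {q : K} (hq : q ≠ 0) (e : K) (k : ℕ) :
    qPochhammer (e * q)⁻¹ q (k + 1) = (1 - (e * q)⁻¹) * qPochhammer e⁻¹ q k := by
  rw [qPochhammer_succ', mul_inv, inv_mul_cancel_right₀ hq]

lemma qPochhammer_inv_pow_succ_eq_zero {K : Type*} [Field K] {q : K} (hq : q ≠ 0) (N : ℕ) :
    qPochhammer (q ^ N)⁻¹ q (N + 1) = 0 := by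
  rw [qPochhammer_succ, inv_mul_cancel₀ (pow_ne_zero N hq), sub_self, mul_zero]

lemma qPochhammer_div_qPochhammer_mul {K : Type*} [Field K] {x q : K} {k : ℕ}
    (h : ∀ j ≤ k, x * q ^ j ≠ 1) :
    qPochhammer x q k / qPochhammer (x * q) q k = (1 - x) / (1 - x * q ^ k) := by
  have h_ne : qPochhammer (x * q) q k ≠ 0 := qPochhammer_ne_zero fun j hj => by
    rw [mul_assoc, ← pow_succ']
    exact h (j + 1) hj
  rw [div_eq_div_iff h_ne (sub_ne_zero.2 (h k le_rfl).symm), one_sub_mul_qPochhammer_mul]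

end qPochhammer

lemma two_mul_choose_two_add (k : ℕ) : 2 * k.choose 2 + k = k * k := by
  induction k with
  | zero => rfl
  | succ k ih => rw [Nat.choose_succ_succ' k 1, Nat.choose_one_right]; linarith

section Watson

variable {K : Type*} [Field K]

/-- The summand of the terminating very-well-poised series
`∑ (1 - a q^{2k}) (a, b, e⁻¹; q)_k / (q, aq/b, aeq; q)_k (-1)^k q^{k(k-1)/2} (aeq/b)^k`. -/
def wellPoisedTerm (a b e q : K) (k : ℕ) : K :=
  (1 - a * q ^ (2 * k)) * qPochhammer a q k * qPochhammer b q k * qPochhammer e⁻¹ q k /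
      (qPochhammer q q k * qPochhammer (a * q / b) q k * qPochhammer (a * e * q) q k) *
    ((-1) ^ k * q ^ k.choose 2 * (a * e * q / b) ^ k)

lemma sum_wellPoisedTerm_mul_sub (a b e q : K) (hq : q ≠ 0) (hb : b ≠ 0) (he : e ≠ 0) (m : ℕ)
    (h1 : ∀ j, q * q ^ j ≠ 1) (hab : ∀ j < m, a * q / b * q ^ j ≠ 1)
    (hae : ∀ j, a * e * q * q ^ j ≠ 1) :
    ∑ k ∈ range (m + 1), ((1 - a * e * q / b) / (1 - a * e * q) * wellPoisedTerm a b (e * q) q k -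
        wellPoisedTerm a b e q k) =
      (-1) ^ (m + 1) * q ^ (m + 1).choose 2 * (a * e * q / b) ^ (m + 1) *
        (qPochhammer a q (m + 1) * qPochhammer b q (m + 1) * qPochhammer e⁻¹ q m) /
        (qPochhammer q q m * qPochhammer (a * q / b) q m * qPochhammer (a * e * q) q (m + 1)) := by
  induction m with
  | zero =>
    have h0 : 1 - a * e * q ≠ 0 := sub_ne_zero.2 fun h => hae 0 (by rw [← h]; simp)
    simp only [wellPoisedTerm, qPochhammer_succ, qPochhammer_zero, sum_range_succ, sum_range_zero,
      Nat.choose_zero_succ, Nat.choose_succ_self, zero_add,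
      pow_zero, pow_one, mul_zero, mul_one, one_mul, div_one]
    field_simp
    ring
  | succ m ih =>
    have h0 : 1 - a * e * q ≠ 0 := sub_ne_zero.2 fun h => hae 0 (by rw [← h]; simp)
    have hae_m : 1 - e * a * q * q ^ (m + 1) ≠ 0 := mul_comm a e ▸ sub_ne_zero.2 (hae _).symm
    have hq_m : 1 - q * q ^ m ≠ 0 := sub_ne_zero.2 (h1 m).symm
    have hA_m : 1 - a * q / b * q ^ m = (b - a * q * q ^ m) / b := by field_simp
    have hab_m : b - a * q * q ^ m ≠ 0 := fun h =>
      hab m m.lt_succ_self (sub_eq_zero.1 (by rw [hA_m, h, zero_div])).symm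
    have hQ : qPochhammer q q m ≠ 0 := qPochhammer_ne_zero fun j _ => h1 j
    have hA : qPochhammer (a * q / b) q m ≠ 0 :=
      qPochhammer_ne_zero fun j hj => hab j (hj.trans m.lt_succ_self)
    have hE : qPochhammer (a * e * q) q (m + 1) ≠ 0 := qPochhammer_ne_zero fun j _ => hae j
    have h_shift : qPochhammer (a * (e * q) * q) q (m + 1) =
        qPochhammer (a * e * q) q (m + 1) * (1 - a * e * q * q ^ (m + 1)) / (1 - a * e * q) := by
      rw [eq_div_iff h0, ← one_sub_mul_qPochhammer_mul, mul_comm, mul_assoc a]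
    have h_pow : (a * (e * q) * q / b) ^ (m + 1) = (a * e * q / b) ^ (m + 1) * q ^ (m + 1) := by
      rw [← mul_pow]; ring
    rw [sum_range_succ, ih fun j hj => hab j (hj.trans m.lt_succ_self)]
    simp only [wellPoisedTerm]
    rw [qPochhammer_inv_mul_succ hq, h_shift, h_pow, pow_succ (a * e * q / b) (m + 1),
      qPochhammer_succ a q (m + 1), qPochhammer_succ b q (m + 1), qPochhammer_succ q,
      qPochhammer_succ (a * q / b), qPochhammer_succ e⁻¹, qPochhammer_succ (a * e * q) q (m + 1),
      Nat.choose_succ_succ' (m + 1) 1, Nat.choose_one_right, hA_m, pow_add q (m + 1)]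
    generalize (a * e * q / b) ^ (m + 1) = Z, qPochhammer q q m = Q,
      qPochhammer (a * q / b) q m = A, qPochhammer (a * e * q) q (m + 1) = E at hQ hA hE ⊢
    rw [mul_comm a e] at h0 ⊢
    field_simp
    ring

lemma sum_wellPoisedTerm (a b q : K) (hq : q ≠ 0) (hb : b ≠ 0) (N : ℕ)
    (h1 : ∀ j, q * q ^ j ≠ 1) (hab : ∀ j < N, a * q / b * q ^ j ≠ 1) (ha : ∀ j, a * q ^ j ≠ 1) :
    ∑ k ∈ range (N + 1), wellPoisedTerm a b (q ^ N) q k =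
      qPochhammer a q (N + 1) / qPochhammer (a * q / b) q N := by
  induction N with
  | zero => simp [wellPoisedTerm, qPochhammer_zero, qPochhammer_succ]
  | succ N ih =>
    have ha_N : 1 - a * q ^ (N + 1) ≠ 0 := sub_ne_zero.2 (ha _).symm
    have hab_N : 1 - a * q / b * q ^ N ≠ 0 := sub_ne_zero.2 (hab N N.lt_succ_self).symm
    have telescope := sum_wellPoisedTerm_mul_sub a b (q ^ N) q hq hb (pow_ne_zero N hq) (N + 1) h1
      hab fun j => by convert ha (N + 1 + j) using 1; ring
    have h_last : wellPoisedTerm a b (q ^ N) q (N + 1) = 0 := by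
      simp [wellPoisedTerm, qPochhammer_inv_pow_succ_eq_zero hq]
    rw [qPochhammer_inv_pow_succ_eq_zero hq, mul_zero, mul_zero, zero_div, sum_sub_distrib,
      sub_eq_zero, ← mul_sum, sum_range_succ (wellPoisedTerm a b (q ^ N) q), h_last, add_zero,
      ih fun j hj => hab j (hj.trans N.lt_succ_self), mul_assoc a, ← pow_succ,
      show a * q ^ (N + 1) / b = a * q / b * q ^ N by ring] at telescope
    rw [qPochhammer_succ a q (N + 1), qPochhammer_succ (a * q / b),
      ← mul_right_inj' (div_ne_zero hab_N ha_N), telescope]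
    generalize 1 - a * q / b * q ^ N = β at hab_N ⊢
    field_simp

/-- The summand of the series `₃φ₂(e⁻¹, a e, s; a, s q; q, q)`, up to the factor `1 - s`. -/
def saalschutzTerm (a e s q : K) (j : ℕ) : K :=
  qPochhammer e⁻¹ q j * qPochhammer (a * e) q j * q ^ j /
    (qPochhammer q q j * qPochhammer a q j * (1 - s * q ^ j))

lemma sum_saalschutzTerm_mul_sub (a e s q : K) (hq : q ≠ 0) (he : e ≠ 0) (m : ℕ)
    (h1 : ∀ j, q * q ^ j ≠ 1) (ha : ∀ j, a * q ^ j ≠ 1) (hs : ∀ j, s * q ^ j ≠ 1) :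
    ∑ j ∈ range (m + 1), ((1 - s * e * q) * (1 - a * e) * saalschutzTerm a (e * q) s q j -
        (s - a * e) * (1 - e * q) * saalschutzTerm a e s q j) =
      (1 - a * q * e ^ 2) * (qPochhammer e⁻¹ q m * qPochhammer (a * e * q) q m) /
        (qPochhammer q q m * qPochhammer a q m) := by
  induction m with
  | zero =>
    have hs0 : 1 - s ≠ 0 := sub_ne_zero.2 fun h => hs 0 (by rw [← h, pow_zero, one_mul])
    simp only [saalschutzTerm, zero_add, sum_range_one, qPochhammer_zero, pow_zero, mul_one,
      div_one]
    field_simp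
    ring
  | succ m ih =>
    have hq_m : 1 - q * q ^ m ≠ 0 := sub_ne_zero.2 (h1 m).symm
    have ha_m : 1 - a * q ^ m ≠ 0 := sub_ne_zero.2 (ha m).symm
    have hs_m : 1 - s * q ^ (m + 1) ≠ 0 := sub_ne_zero.2 (hs _).symm
    have hQ : qPochhammer q q m ≠ 0 := qPochhammer_ne_zero fun j _ => h1 j
    have hA : qPochhammer a q m ≠ 0 := qPochhammer_ne_zero fun j _ => ha j
    rw [sum_range_succ, ih, saalschutzTerm, saalschutzTerm,
      qPochhammer_inv_mul_succ hq, ← mul_assoc a, qPochhammer_succ' (a * e),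
      qPochhammer_succ (a * e * q), qPochhammer_succ q, qPochhammer_succ a, qPochhammer_succ e⁻¹]
    field_simp
    ring

lemma sum_saalschutzTerm (a s q : K) (hq : q ≠ 0) (hs0 : s ≠ 0) (k : ℕ)
    (h1 : ∀ j, q * q ^ j ≠ 1) (ha : ∀ j, a * q ^ j ≠ 1) (hs : ∀ j, s * q ^ j ≠ 1) :
    ∑ j ∈ range (k + 1), saalschutzTerm a (q ^ k) s q j =
      s ^ k * qPochhammer (a / s) q k * qPochhammer q q k /
        (qPochhammer s q (k + 1) * qPochhammer a q k) := by
  induction k with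
  | zero => simp [saalschutzTerm, qPochhammer_zero, qPochhammer_succ]
  | succ k ih =>
    have ha_k : 1 - a * q ^ k ≠ 0 := sub_ne_zero.2 (ha k).symm
    have hs_k : 1 - s * q ^ (k + 1) ≠ 0 := sub_ne_zero.2 (hs _).symm
    have telescope :=
      sum_saalschutzTerm_mul_sub a (q ^ k) s q hq (pow_ne_zero k hq) (k + 1) h1 ha hs
    have h_last : saalschutzTerm a (q ^ k) s q (k + 1) = 0 := by
      simp [saalschutzTerm, qPochhammer_inv_pow_succ_eq_zero hq]
    rw [qPochhammer_inv_pow_succ_eq_zero hq, zero_mul, mul_zero, zero_div, sum_sub_distrib,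
      sub_eq_zero, ← mul_sum, ← mul_sum, sum_range_succ (saalschutzTerm a (q ^ k) s q), h_last,
      add_zero, ih, mul_assoc s, ← pow_succ] at telescope
    rw [← mul_right_inj' (mul_ne_zero hs_k ha_k), telescope, qPochhammer_succ s q (k + 1),
      qPochhammer_succ a, qPochhammer_succ (a / s), qPochhammer_succ q]
    field_simp
    ring

lemma qPochhammer_inv_pow_mul (q : K) (hq : q ≠ 0) (j m : ℕ) :
    qPochhammer (q ^ (j + m))⁻¹ q j * q ^ ((j + m).choose 2 + j) * qPochhammer q q m =
      (-1) ^ j * q ^ m.choose 2 * qPochhammer q q (j + m) := by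
  induction j with
  | zero => simp [qPochhammer_zero]
  | succ j ih =>
    rw [add_right_comm, pow_succ, qPochhammer_inv_mul_succ hq, ← pow_succ,
      qPochhammer_succ q q (j + m), ← pow_succ', pow_succ (-1 : K) j, mul_neg_one]
    have h_choose : (j + m + 1).choose 2 = (j + m).choose 2 + (j + m) := by
      rw [Nat.choose_succ_succ' (j + m) 1, Nat.choose_one_right, add_comm]
    rw [h_choose, show (j + m).choose 2 + (j + m) + (j + 1) =
      (j + m).choose 2 + j + (j + m + 1) by ring, pow_add q ((j + m).choose 2 + j)]
    have h_top : (1 - (q ^ (j + m + 1))⁻¹) * q ^ (j + m + 1) = -(1 - q ^ (j + m + 1)) := by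
      rw [sub_mul, inv_mul_cancel₀ (pow_ne_zero _ hq)]; ring
    linear_combination q ^ ((j + m).choose 2 + j) * qPochhammer (q ^ (j + m))⁻¹ q j *
      qPochhammer q q m * h_top - (1 - q ^ (j + m + 1)) * ih

/- In the language of Bailey pairs: the sequence `1 / ((q, s²; q)_j (1 - s qʲ))` has a closed form
partner, which carries the very-well-poised factor `(1 - s² q^{2k}) / (1 - s qᵏ) = 1 + s qᵏ`. -/
lemma sum_bailey (s q : K) (hq : q ≠ 0) (hs0 : s ≠ 0) (k : ℕ)
    (h1 : ∀ j, q * q ^ j ≠ 1) (hs2 : ∀ j, s ^ 2 * q ^ j ≠ 1) (hs : ∀ j, s * q ^ j ≠ 1) :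
    ∑ j ∈ range (k + 1), (-1) ^ (k - j) * q ^ (k - j).choose 2 * qPochhammer (s ^ 2 * q ^ j) q k /
        (qPochhammer q q j * qPochhammer q q (k - j) * (1 - s * q ^ j)) =
      (-1) ^ k * q ^ k.choose 2 * s ^ k / (1 - s * q ^ k) := by
  have hQ : ∀ j, qPochhammer q q j ≠ 0 := fun j => qPochhammer_ne_zero fun i _ => h1 i
  have hA : ∀ j, qPochhammer (s ^ 2) q j ≠ 0 := fun j => qPochhammer_ne_zero fun i _ => hs2 i
  have hS : ∀ j, 1 - s * q ^ j ≠ 0 := fun j => sub_ne_zero.2 (hs j).symm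
  have h_term : ∀ j ∈ range (k + 1), (-1) ^ (k - j) * q ^ (k - j).choose 2 *
      qPochhammer (s ^ 2 * q ^ j) q k /
        (qPochhammer q q j * qPochhammer q q (k - j) * (1 - s * q ^ j)) =
      (-1) ^ k * q ^ k.choose 2 * (qPochhammer (s ^ 2) q k / qPochhammer q q k) *
        saalschutzTerm (s ^ 2) (q ^ k) s q j := by
    intro j hj
    obtain ⟨m, rfl⟩ := Nat.exists_eq_add_of_le (mem_range_succ_iff.1 hj)
    have h_swap : qPochhammer (s ^ 2) q j * qPochhammer (s ^ 2 * q ^ j) q (j + m) =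
        qPochhammer (s ^ 2) q (j + m) * qPochhammer (s ^ 2 * q ^ (j + m)) q j := by
      rw [← qPochhammer_add, ← qPochhammer_add, add_comm]
    have h_flip := qPochhammer_inv_pow_mul q hq j m
    have h_sign : (-1 : K) ^ (j + m) * (-1) ^ j = (-1) ^ m := by
      rw [add_comm, pow_add, mul_assoc, ← mul_pow, neg_one_mul, neg_neg, one_pow, mul_one]
    rw [Nat.add_sub_cancel_left, saalschutzTerm, ← mul_div_assoc _ (qPochhammer (s ^ 2) q _),
      div_mul_div_comm,
      div_eq_div_iff (mul_ne_zero (mul_ne_zero (hQ j) (hQ m)) (hS j))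
        (mul_ne_zero (hQ _) (mul_ne_zero (mul_ne_zero (hQ j) (hA j)) (hS j))), ← h_sign]
    linear_combination (1 - s * q ^ j) * qPochhammer q q j * (-1) ^ (j + m) *
      ((-1) ^ j * q ^ m.choose 2 * qPochhammer q q (j + m) * h_swap -
        qPochhammer (s ^ 2) q (j + m) * qPochhammer (s ^ 2 * q ^ (j + m)) q j * h_flip)
  rw [sum_congr rfl h_term, ← mul_sum, sum_saalschutzTerm _ _ _ hq hs0 k h1 hs2 hs, pow_two,
    mul_div_cancel_left₀ _ hs0, qPochhammer_succ s, ← pow_two]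
  have hQ_k := hQ k
  have hA_k := hA k
  have hS_k := hS k
  have hs_k : qPochhammer s q k ≠ 0 := qPochhammer_ne_zero fun j _ => hs j
  field_simp

/-- The factor `(q⁻ᴺ, b; q)_k / (aq/b, a q^{N+1}; q)_k (a q^{N+1} / b)ᵏ` through which the
parameters `q⁻ᴺ` and `b` enter the transformation below. -/
def baileyWeight (a b q : K) (N k : ℕ) : K :=
  qPochhammer (q ^ N)⁻¹ q k * qPochhammer b q k * (a * q ^ N * q / b) ^ k /
    (qPochhammer (a * q / b) q k * qPochhammer (a * q ^ N * q) q k)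

lemma baileyWeight_add (a b q : K) (hq : q ≠ 0) (hb : b ≠ 0) (j M m : ℕ) :
    baileyWeight a b q (j + M) (j + m) * (1 - a * q ^ (2 * (j + m))) *
        ((-1) ^ m * q ^ m.choose 2) * qPochhammer (a * q ^ j) q (j + m) / qPochhammer q q m =
      baileyWeight a b q (j + M) j * qPochhammer (a * q ^ j) q j *
        wellPoisedTerm (a * q ^ (2 * j)) (b * q ^ j) (q ^ M) q m := by
  have h_inv : (q ^ (j + M))⁻¹ * q ^ j = (q ^ M)⁻¹ := by field_simp; ring
  have h_div : a * q ^ (2 * j) * q / (b * q ^ j) = a * q / b * q ^ j := by field_simp; ring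
  have h_base : a * q ^ (2 * j) * q ^ M * q / (b * q ^ j) = a * q ^ (j + M) * q / b := by
    field_simp; ring
  have h_shift : a * q ^ (2 * j) * q ^ M * q = a * q ^ (j + M) * q * q ^ j := by ring
  have h_double : a * q ^ j * q ^ j = a * q ^ (2 * j) := by ring
  rw [baileyWeight, baileyWeight, wellPoisedTerm, h_base, h_div, h_shift, qPochhammer_add _ q j m,
    h_inv, qPochhammer_add b, qPochhammer_add (a * q / b), qPochhammer_add (a * q ^ (j + M) * q),
    qPochhammer_add (a * q ^ j), h_double]
  ring

lemma sum_baileyWeight_add (a b q : K) (hq : q ≠ 0) (hb : b ≠ 0) (j M : ℕ)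
    (h1 : ∀ j, q * q ^ j ≠ 1) (ha : ∀ j, a * q ^ j ≠ 1)
    (hab : ∀ i < j + M, a * q / b * q ^ i ≠ 1) :
    ∑ m ∈ range (M + 1), baileyWeight a b q (j + M) (j + m) * (1 - a * q ^ (2 * (j + m))) *
        ((-1) ^ m * q ^ m.choose 2) * qPochhammer (a * q ^ j) q (j + m) / qPochhammer q q m =
      qPochhammer a q (j + M + 1) / qPochhammer (a * q / b) q (j + M) *
        (qPochhammer (q ^ (j + M))⁻¹ q j * qPochhammer b q j * (a * q ^ (j + M) * q / b) ^ j /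
          qPochhammer a q j) := by
  have h_div : a * q ^ (2 * j) * q / (b * q ^ j) = a * q / b * q ^ j := by field_simp; ring
  have h_sum := sum_wellPoisedTerm (a * q ^ (2 * j)) (b * q ^ j) q hq
    (mul_ne_zero hb (pow_ne_zero j hq)) M h1 (fun i hi => by
      rw [h_div, mul_assoc, ← pow_add]
      exact hab _ (Nat.add_lt_add_left hi j))
    fun i => by rw [mul_assoc, ← pow_add]; exact ha _
  have h_join : qPochhammer a q j * (qPochhammer (a * q ^ j) q j *
      qPochhammer (a * q ^ (2 * j)) q (M + 1)) =
      qPochhammer a q (j + M + 1) * qPochhammer (a * q ^ (j + M) * q) q j := by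
    have h_double : a * q ^ (2 * j) = a * q ^ j * q ^ j := by ring
    rw [h_double, ← qPochhammer_add, ← qPochhammer_add, mul_assoc, ← pow_succ, ← qPochhammer_add,
      show j + (j + (M + 1)) = j + M + 1 + j by ring]
  have hA : qPochhammer a q j ≠ 0 := qPochhammer_ne_zero fun i _ => ha i
  have hA' : qPochhammer (a * q ^ (j + M) * q) q j ≠ 0 := qPochhammer_ne_zero fun i _ => by
    rw [mul_assoc a, ← pow_succ, mul_assoc, ← pow_add]; exact ha _
  have h_ratio : qPochhammer (a * q ^ j) q j * qPochhammer (a * q ^ (2 * j)) q (M + 1) /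
      qPochhammer (a * q ^ (j + M) * q) q j = qPochhammer a q (j + M + 1) / qPochhammer a q j := by
    rw [div_eq_div_iff hA' hA, ← h_join, mul_comm]
  rw [sum_congr rfl fun m _ => baileyWeight_add a b q hq hb j M m, ← mul_sum, h_sum, h_div,
    baileyWeight, qPochhammer_add (a * q / b)]
  linear_combination qPochhammer (q ^ (j + M))⁻¹ q j * qPochhammer b q j *
    (a * q ^ (j + M) * q / b) ^ j /
      (qPochhammer (a * q / b) q j * qPochhammer (a * q / b * q ^ j) q M) * h_ratio

/- Watson's transformation of a terminating very-well-poised series, in the case where the factor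
`(1 - s² q^{2k}) / (1 - s²)` is partly cancelled by a numerator parameter `s`: expand
`(1 - s² q^{2k}) / (1 - s qᵏ)` by `sum_bailey` and sum over `k` first. -/
lemma watson_transformation (s b q : K) (N : ℕ) (hq : q ≠ 0) (hs0 : s ≠ 0) (hb : b ≠ 0)
    (h1 : ∀ j, q * q ^ j ≠ 1) (hs2 : ∀ j, s ^ 2 * q ^ j ≠ 1) (hs : ∀ j, s * q ^ j ≠ 1)
    (hsb : ∀ j < N, s ^ 2 * q / b * q ^ j ≠ 1) :
    ∑ k ∈ range (N + 1), (1 + s * q ^ k) * baileyWeight (s ^ 2) b q N k *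
        ((-1) ^ k * q ^ k.choose 2 * s ^ k) =
      qPochhammer (s ^ 2) q (N + 1) / qPochhammer (s ^ 2 * q / b) q N *
        ∑ j ∈ range (N + 1), qPochhammer (q ^ N)⁻¹ q j * qPochhammer b q j *
          (s ^ 2 * q ^ N * q / b) ^ j /
            (qPochhammer q q j * qPochhammer (s ^ 2) q j * (1 - s * q ^ j)) := by
  have h_left : ∀ k, (1 + s * q ^ k) * baileyWeight (s ^ 2) b q N k *
        ((-1) ^ k * q ^ k.choose 2 * s ^ k) =
      ∑ j ∈ range (k + 1), (1 - s * q ^ j)⁻¹ / qPochhammer q q j *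
        (baileyWeight (s ^ 2) b q N (j + (k - j)) * (1 - s ^ 2 * q ^ (2 * (j + (k - j)))) *
          ((-1) ^ (k - j) * q ^ (k - j).choose 2) *
          qPochhammer (s ^ 2 * q ^ j) q (j + (k - j)) / qPochhammer q q (k - j)) := by
    intro k
    have hS : 1 - s * q ^ k ≠ 0 := sub_ne_zero.2 (hs k).symm
    have h_bailey := (eq_div_iff hS).1 (sum_bailey s q hq hs0 k h1 hs2 hs)
    trans (1 + s * q ^ k) * baileyWeight (s ^ 2) b q N k * ((∑ j ∈ range (k + 1), (-1) ^ (k - j) *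
      q ^ (k - j).choose 2 * qPochhammer (s ^ 2 * q ^ j) q k /
        (qPochhammer q q j * qPochhammer q q (k - j) * (1 - s * q ^ j))) * (1 - s * q ^ k))
    · rw [h_bailey]
    · rw [sum_mul, mul_sum]
      refine sum_congr rfl fun j hj => ?_
      rw [Nat.add_sub_cancel' (mem_range_succ_iff.1 hj)]
      simp only [div_eq_mul_inv, mul_inv]
      ring
  simp only [h_left]
  rw [sum_range_diag_flip (N + 1) fun j m => (1 - s * q ^ j)⁻¹ / qPochhammer q q j *
        (baileyWeight (s ^ 2) b q N (j + m) * (1 - s ^ 2 * q ^ (2 * (j + m))) *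
          ((-1) ^ m * q ^ m.choose 2) *
          qPochhammer (s ^ 2 * q ^ j) q (j + m) / qPochhammer q q m), mul_sum]
  refine sum_congr rfl fun j hj => ?_
  obtain ⟨M, rfl⟩ := Nat.exists_eq_add_of_le (mem_range_succ_iff.1 hj)
  rw [← mul_sum, add_assoc, Nat.add_sub_cancel_left,
    sum_baileyWeight_add _ b q hq hb j M h1 hs2 hsb]
  simp only [div_eq_mul_inv, mul_inv]
  ring_nf

/-- The prefactor and summand coefficient of the right-hand side of `watson_transformation` for
`b = s² y²` and `q⁻ᴺ = s² / y²`. -/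
def watsonCoeff (q s y : K) (N k : ℕ) : K :=
  (1 - y ^ 2) * (-1) ^ N * (y ^ 2) ^ N / q ^ (N + 1).choose 2 * (q / s ^ 2) ^ k /
    (qPochhammer q q k * qPochhammer (s ^ 2) q k * (1 - s * q ^ k))

lemma qPochhammer_div_pow_succ (q x : K) (hq : q ≠ 0) (hx : x ≠ 0) (N : ℕ) :
    qPochhammer (x / q ^ N) q (N + 1) =
      (1 - x) * (-1) ^ N * x ^ N / q ^ (N + 1).choose 2 * qPochhammer (q / x) q N := by
  induction N with
  | zero => simp [qPochhammer_zero, qPochhammer_succ]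
  | succ N ih =>
    have h_base : x / q ^ (N + 1) * q = x / q ^ N := by field_simp; ring
    rw [qPochhammer_succ', h_base, ih, qPochhammer_succ (q / x), Nat.choose_succ_succ' (N + 1) 1,
      Nat.choose_one_right, pow_add q]
    field_simp
    ring

lemma sum_watsonCoeff (q s y : K) (N : ℕ) (hq : q ≠ 0) (hs0 : s ≠ 0) (hy : y ≠ 0)
    (hsy : s ^ 2 * q ^ N = y ^ 2) (h1 : ∀ j, q * q ^ j ≠ 1) (hs2 : ∀ j, s ^ 2 * q ^ j ≠ 1)
    (hs : ∀ j, s * q ^ j ≠ 1) (hqy : ∀ j < N, q / y ^ 2 * q ^ j ≠ 1) :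
    ∑ k ∈ range (N + 1), (-1) ^ k * (1 + s * q ^ k) * q ^ k.choose 2 * (q / s) ^ k *
        (qPochhammer (s ^ 2 * y ^ 2) q k * qPochhammer (s ^ 2 / y ^ 2) q k /
          (qPochhammer (q * y ^ 2) q k * qPochhammer (q / y ^ 2) q k)) =
      ∑ k ∈ range (N + 1), watsonCoeff q s y N k *
        (qPochhammer (s ^ 2 * y ^ 2) q k * qPochhammer (s ^ 2 / y ^ 2) q k) := by
  have h_inv : (q ^ N)⁻¹ = s ^ 2 / y ^ 2 := by rw [← hsy]; field_simp
  have h_quot : s ^ 2 * q / (s ^ 2 * y ^ 2) = q / y ^ 2 := by field_simp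
  have h_base : y ^ 2 * q / (s ^ 2 * y ^ 2) = q / s ^ 2 := by field_simp
  have h_nonzero : qPochhammer (q / y ^ 2) q N ≠ 0 := qPochhammer_ne_zero hqy
  have h_prefactor := qPochhammer_div_pow_succ q (y ^ 2) hq (pow_ne_zero 2 hy) N
  rw [← hsy, mul_div_cancel_right₀ _ (pow_ne_zero N hq), hsy] at h_prefactor
  have watson := watson_transformation s (s ^ 2 * y ^ 2) q N hq hs0
    (mul_ne_zero (pow_ne_zero 2 hs0) (pow_ne_zero 2 hy)) h1 hs2 hs (by rwa [h_quot])
  simp only [baileyWeight, hsy, h_inv, h_quot, h_base] at watson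
  rw [h_prefactor, mul_div_cancel_right₀ _ h_nonzero, mul_sum] at watson
  convert watson using 2 with k _ k _
  · have h_pow : (q / s) ^ k = (q / s ^ 2) ^ k * s ^ k := by rw [← mul_pow]; field_simp
    rw [h_pow, mul_comm (y ^ 2) q]
    ring
  · rw [watsonCoeff]
    ring

end Watson

/-- The product `(c x, c / x; q)_k` as a polynomial in `u = x + 1 / x`. -/
def symmPochhammer {R : Type*} [CommRing R] (c u q : R) (k : ℕ) : R :=
  ∏ j ∈ range k, (1 - c * q ^ j * u + (c * q ^ j) ^ 2)

section symmPochhammer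

variable {R : Type*} [CommRing R] (c u q : R)

lemma symmPochhammer_zero : symmPochhammer c u q 0 = 1 := prod_range_zero _

lemma symmPochhammer_succ (k : ℕ) : symmPochhammer c u q (k + 1) =
    symmPochhammer c u q k * (1 - c * q ^ k * u + (c * q ^ k) ^ 2) :=
  prod_range_succ _ _

lemma symmPochhammer_add (j k : ℕ) : symmPochhammer c u q (j + k) =
    symmPochhammer c u q j * symmPochhammer (c * q ^ j) u q k := by
  simp only [symmPochhammer, prod_range_add, pow_add, mul_assoc]

lemma symmPochhammer_succ' (k : ℕ) : symmPochhammer c u q (k + 1) =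
    (1 - c * u + c ^ 2) * symmPochhammer (c * q) u q k := by
  rw [add_comm, symmPochhammer_add, symmPochhammer_succ, symmPochhammer_zero, pow_zero, pow_one,
    one_mul, mul_one]

lemma symmPochhammer_add_of_mul_eq_one {x x' : R} (h : x * x' = 1) (k : ℕ) :
    symmPochhammer c (x + x') q k = qPochhammer (c * x) q k * qPochhammer (c * x') q k := by
  rw [symmPochhammer, qPochhammer, qPochhammer, ← prod_mul_distrib]
  exact prod_congr rfl fun j _ => by linear_combination -(c * q ^ j) ^ 2 * h

lemma symmPochhammer_two (k : ℕ) : symmPochhammer c 2 q k = qPochhammer c q k ^ 2 := by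
  rw [← one_add_one_eq_two, symmPochhammer_add_of_mul_eq_one c q (one_mul 1), mul_one, pow_two]

lemma map_symmPochhammer {S : Type*} [CommRing S] (f : R →+* S) (k : ℕ) :
    f (symmPochhammer c u q k) = symmPochhammer (f c) (f u) (f q) k := by
  simp [symmPochhammer, map_prod]

lemma symmPochhammer_reverse {c q : R} {l k : ℕ} (h : c * q ^ (l + k) = 1) :
    symmPochhammer c u q k =
      (c ^ 2) ^ k * (q ^ 2) ^ k.choose 2 * symmPochhammer (q * q ^ l) u q k := by
  induction k generalizing l with
  | zero => simp [symmPochhammer_zero]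
  | succ k ih =>
    have h_last : c * q ^ k * (q * q ^ l) = 1 := by rw [← h]; ring
    have h_shift : q * q ^ (l + 1) = q * q ^ l * q := by ring
    rw [symmPochhammer_succ, ih (l := l + 1) (by rw [← h]; congr 2; ring), symmPochhammer_succ',
      Nat.choose_succ_succ' k 1, Nat.choose_one_right, h_shift]
    linear_combination (c ^ 2) ^ k * (q ^ 2) ^ k.choose 2 *
      symmPochhammer (q * q ^ l * q) u q k *
      (c * q ^ k * u - (c * q ^ k * (q * q ^ l) + 1)) * h_last

end symmPochhammer

section clearedSeries

/-- The series
`∑_{k ≤ N} (-1)ᵏ (1 + s qᵏ) q^{k(k-1)/2} (q / s)ᵏ (s² x, s² / x; q)_k / (q x, q / x; q)_k`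
with `u = x + 1 / x`, multiplied by `sᴺ (q x, q / x; q)_N` so that no denominator is left. -/
def clearedSeries {R : Type*} [CommRing R] (s q u : R) (N : ℕ) : R :=
  ∑ k ∈ range (N + 1), (-1) ^ k * (1 + s * q ^ k) * q ^ (k.choose 2 + k) * s ^ (N - k) *
    (symmPochhammer (s ^ 2) u q k * symmPochhammer (q * q ^ k) u q (N - k))

lemma map_clearedSeries {R S : Type*} [CommRing R] [CommRing S] (f : R →+* S) (s q u : R) (N : ℕ) :
    f (clearedSeries s q u N) = clearedSeries (f s) (f q) (f u) N := by
  simp [clearedSeries, map_symmPochhammer]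

lemma pow_mul_pow_eq_of_mul_pow_eq_one {R : Type*} [CommRing R] {t q : R} {N a₁ b₁ a₂ b₂ : ℕ}
    (h : t * q ^ N = 1) (hab : b₁ + N * a₂ = b₂ + N * a₁) :
    t ^ a₁ * q ^ b₁ = t ^ a₂ * q ^ b₂ :=
  calc t ^ a₁ * q ^ b₁ = t ^ a₁ * q ^ b₁ * (t * q ^ N) ^ a₂ := by rw [h, one_pow, mul_one]
    _ = t ^ (a₁ + a₂) * q ^ (b₁ + N * a₂) := by rw [mul_pow, ← pow_mul]; ring
    _ = t ^ a₂ * q ^ b₂ * (t * q ^ N) ^ a₁ := by rw [hab, mul_pow, ← pow_mul]; ring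
    _ = t ^ a₂ * q ^ b₂ := by rw [h, one_pow, mul_one]

/- The two products on the right are exchanged by `k ↔ l`, so the terms of index `k` and `l` are
opposite. -/
lemma clearedSeries_term_of_mul_pow_eq_neg_one {R : Type*} [CommRing R] (t q u : R) (k l : ℕ)
    (h : t * q ^ (k + l) = 1) :
    (-1) ^ k * (1 + -t * (q ^ 2) ^ k) * (q ^ 2) ^ (k.choose 2 + k) * (-t) ^ l *
        (symmPochhammer ((-t) ^ 2) u (q ^ 2) k * symmPochhammer (q ^ 2 * (q ^ 2) ^ k) u (q ^ 2) l) =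
      (-1) ^ (k + l) * (t ^ (4 * k + l) * q ^ (6 * k.choose 2 + 2 * k) -
          t ^ (4 * l + k) * q ^ (6 * l.choose 2 + 2 * l)) *
        (symmPochhammer (q ^ 2 * (q ^ 2) ^ l) u (q ^ 2) k *
          symmPochhammer (q ^ 2 * (q ^ 2) ^ k) u (q ^ 2) l) := by
  have h_reverse := symmPochhammer_reverse u (c := (-t) ^ 2) (q := q ^ 2) (l := l) (k := k) <| by
    rw [neg_sq, ← pow_mul, mul_comm 2, pow_mul, ← mul_pow, add_comm l, h, one_pow]
  have h_exponent : t ^ (4 * k + l + 1) * q ^ (6 * k.choose 2 + 4 * k) =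
      t ^ (4 * l + k) * q ^ (6 * l.choose 2 + 2 * l) := by
    refine pow_mul_pow_eq_of_mul_pow_eq_one h ?_
    have hk := two_mul_choose_two_add k
    have hl := two_mul_choose_two_add l
    zify at hk hl ⊢
    linear_combination 3 * hk - 3 * hl
  rw [h_reverse, ← h_exponent, neg_pow t l]
  ring

lemma clearedSeries_eq_zero {R : Type*} [CommRing R] (s q u : R) (N : ℕ) (h : s * q ^ N = -1) :
    clearedSeries s (q ^ 2) u N = 0 := by
  have h_neg : -s * q ^ N = 1 := by rw [neg_mul, h, neg_neg]
  have h_term : ∀ k ∈ range (N + 1), (-1) ^ k * (1 + s * (q ^ 2) ^ k) *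
      (q ^ 2) ^ (k.choose 2 + k) * s ^ (N - k) *
      (symmPochhammer (s ^ 2) u (q ^ 2) k *
        symmPochhammer (q ^ 2 * (q ^ 2) ^ k) u (q ^ 2) (N - k)) =
      (-1) ^ (k + (N - k)) * ((-s) ^ (4 * k + (N - k)) * q ^ (6 * k.choose 2 + 2 * k) -
          (-s) ^ (4 * (N - k) + k) * q ^ (6 * (N - k).choose 2 + 2 * (N - k))) *
        (symmPochhammer (q ^ 2 * (q ^ 2) ^ (N - k)) u (q ^ 2) k *
          symmPochhammer (q ^ 2 * (q ^ 2) ^ k) u (q ^ 2) (N - k)) := fun k hk => by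
    simpa only [neg_neg] using clearedSeries_term_of_mul_pow_eq_neg_one (-s) q u k (N - k)
      (by rwa [Nat.add_sub_cancel' (mem_range_succ_iff.1 hk)])
  rw [clearedSeries, sum_congr rfl h_term]
  refine sum_involution (fun k _ => N - k) (fun k hk => ?_) (fun k _ h_ne h_fixed => h_ne ?_)
    (fun k _ => mem_range_succ_iff.2 (N.sub_le k))
    fun k hk => Nat.sub_sub_self (mem_range_succ_iff.1 hk)
  · rw [Nat.sub_sub_self (mem_range_succ_iff.1 hk), add_comm (N - k) k]
    ring
  · rw [h_fixed]
    ring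

lemma dvd_clearedSeries {R : Type*} [CommRing R] {w : R} (s q u : R) (N : ℕ)
    (h : w ∣ 1 + s * q ^ N) : w ∣ clearedSeries s (q ^ 2) u N := by
  rw [← Ideal.mem_span_singleton, ← Ideal.Quotient.eq_zero_iff_mem, map_clearedSeries, map_pow]
  apply clearedSeries_eq_zero
  rw [← map_pow, ← map_mul, ← add_eq_zero_iff_eq_neg', ← map_one (Ideal.Quotient.mk _), ← map_add,
    Ideal.Quotient.eq_zero_iff_mem, Ideal.mem_span_singleton]
  exact h

/-- The difference of `clearedSeries s q u N` and `∑_{k ≤ N} g k (s² x, s² / x; q)_k`, the latter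
carrying the same factor `sᴺ (q x, q / x; q)_N`, where `u = x + 1 / x`. -/
def clearedDefect {R : Type*} [CommRing R] (s q u : R) (g : ℕ → R) (N : ℕ) : R :=
  clearedSeries s q u N -
    s ^ N * symmPochhammer q u q N * ∑ k ∈ range (N + 1), g k * symmPochhammer (s ^ 2) u q k

lemma map_clearedDefect {R S : Type*} [CommRing R] [CommRing S] (f : R →+* S) (s q u : R)
    (g : ℕ → R) (N : ℕ) :
    f (clearedDefect s q u g N) = clearedDefect (f s) (f q) (f u) (f ∘ g) N := by
  simp [clearedDefect, map_clearedSeries, map_symmPochhammer]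

lemma dvd_clearedDefect {R : Type*} [CommRing R] {w : R} (s q u : R) (g : ℕ → R) (N : ℕ)
    (h : w ∣ 1 + s * q ^ N) (hg : ∀ k ≤ N, w ∣ g k) : w ∣ clearedDefect s (q ^ 2) u g N :=
  dvd_sub (dvd_clearedSeries s q u N h) <| dvd_mul_of_dvd_right
    (dvd_sum fun k hk => dvd_mul_of_dvd_left (hg k (mem_range_succ_iff.1 hk)) _) _

lemma mul_sub_dvd_eval_of_C_dvd {R : Type*} [CommRing R] [IsDomain R] {P : R[X]} {w a : R} (b : R)
    (hw : C w ∣ P) (ha : P.IsRoot a) : w * (b - a) ∣ P.eval b := by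
  obtain ⟨P, rfl⟩ := hw
  rw [IsRoot, eval_mul, eval_C] at ha
  rw [eval_mul, eval_C]
  rcases mul_eq_zero.1 ha with rfl | ha
  · simp
  · exact mul_dvd_mul_left w (by simpa [ha] using sub_dvd_eval_sub b a P)

/- The defect is a polynomial in `u`; it is divisible by `w` as such and vanishes at `u = v₀`. -/
lemma mul_sub_dvd_clearedDefect {R : Type*} [CommRing R] [IsDomain R] {w v₀ : R} (s q v : R)
    (g : ℕ → R) (N : ℕ) (h : w ∣ 1 + s * q ^ N) (hg : ∀ k ≤ N, w ∣ g k)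
    (h_root : clearedDefect s (q ^ 2) v₀ g N = 0) :
    w * (v - v₀) ∣ clearedDefect s (q ^ 2) v g N := by
  have h_eval : ∀ v, (clearedDefect (C s) (C q ^ 2) X (C ∘ g) N).eval v =
      clearedDefect s (q ^ 2) v g N := fun v => by
    rw [← coe_evalRingHom, map_clearedDefect]
    simp [Function.comp_def]
  rw [← h_eval]
  refine mul_sub_dvd_eval_of_C_dvd v (dvd_clearedDefect _ _ _ _ _ ?_ fun k hk => ?_)
    ((h_eval v₀).trans h_root)
  · simpa using map_dvd C h
  · exact map_dvd C (hg k hk)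

lemma clearedDefect_congr {R : Type*} [CommRing R] (s q u : R) {g g' : ℕ → R} {N : ℕ}
    (h : ∀ k ≤ N, g k = g' k) : clearedDefect s q u g N = clearedDefect s q u g' N := by
  rw [clearedDefect, clearedDefect, sum_congr rfl fun k hk => by
    rw [h k (mem_range_succ_iff.1 hk)]]

lemma exists_clearedDefect_eq_mul {K : Type*} [Field K] {R : Subring K} {w s q v v₀ : K}
    {g : ℕ → K} {N : ℕ} (hw : w ∈ R) (hs : s ∈ R) (hq : q ∈ R) (hv : v ∈ R) (hv₀ : v₀ ∈ R)
    (h : ∃ c ∈ R, 1 + s * q ^ N = w * c) (hg : ∀ k ≤ N, ∃ c ∈ R, g k = w * c)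
    (h_root : clearedDefect s (q ^ 2) v₀ g N = 0) :
    ∃ c ∈ R, clearedDefect s (q ^ 2) v g N = w * (v - v₀) * c := by
  lift w to R using hw
  lift s to R using hs
  lift q to R using hq
  lift v to R using hv
  lift v₀ to R using hv₀
  have h_lift : ∀ k, ∃ c : R, k ≤ N → g k = w * c := fun k => by
    by_cases hk : k ≤ N
    · obtain ⟨c, hc, h_eq⟩ := hg k hk
      exact ⟨⟨c, hc⟩, fun _ => h_eq⟩
    · exact ⟨0, fun h => absurd h hk⟩
  choose c hc using h_lift
  have h_map : ∀ u : R, clearedDefect (s : K) (q ^ 2) u g N =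
      R.subtype (clearedDefect s (q ^ 2) u (fun k => w * c k) N) := fun u => by
    rw [map_clearedDefect, clearedDefect_congr _ _ _ hc, map_pow]
    rfl
  obtain ⟨b, hb, h_eq⟩ := h
  obtain ⟨a, ha⟩ := mul_sub_dvd_clearedDefect s q v (fun k => w * c k) N
    ⟨⟨b, hb⟩, Subtype.ext h_eq⟩ (fun k _ => dvd_mul_right w _)
    (Subtype.ext ((h_map v₀).symm.trans h_root))
  exact ⟨a, a.2, by rw [h_map, ha, map_mul, map_mul, map_sub]; rfl⟩

lemma clearedDefect_eq {K : Type*} [Field K] (s q u : K) (g : ℕ → K) (N : ℕ) (hs0 : s ≠ 0)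
    (hA : symmPochhammer q u q N ≠ 0) :
    clearedDefect s q u g N = s ^ N * symmPochhammer q u q N *
      (∑ k ∈ range (N + 1), (-1) ^ k * (1 + s * q ^ k) * q ^ k.choose 2 * (q / s) ^ k *
          (symmPochhammer (s ^ 2) u q k / symmPochhammer q u q k) -
        ∑ k ∈ range (N + 1), g k * symmPochhammer (s ^ 2) u q k) := by
  rw [clearedDefect, mul_sub, clearedSeries]
  congr 1
  rw [mul_sum]
  refine sum_congr rfl fun k hk => ?_
  obtain ⟨l, rfl⟩ := Nat.exists_eq_add_of_le (mem_range_succ_iff.1 hk)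
  rw [symmPochhammer_add] at hA ⊢
  have hA_k := left_ne_zero_of_mul hA
  rw [Nat.add_sub_cancel_left, div_pow, pow_add s]
  field_simp
  ring

lemma clearedDefect_watsonCoeff_eq_zero {K : Type*} [Field K] (q s y : K) (N : ℕ) (hq : q ≠ 0)
    (hs0 : s ≠ 0) (hy : y ≠ 0) (hsy : s ^ 2 * q ^ N = y ^ 2) (h1 : ∀ j, q * q ^ j ≠ 1)
    (hs2 : ∀ j, s ^ 2 * q ^ j ≠ 1) (hs : ∀ j, s * q ^ j ≠ 1)
    (hqy : ∀ j < N, q / y ^ 2 * q ^ j ≠ 1) (hqy' : ∀ j < N, q * y ^ 2 * q ^ j ≠ 1) :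
    clearedDefect s q (y ^ 2 + (y ^ 2)⁻¹) (watsonCoeff q s y N) N = 0 := by
  have h_symm := fun c => symmPochhammer_add_of_mul_eq_one c q (mul_inv_cancel₀ (pow_ne_zero 2 hy))
  simp only [← div_eq_mul_inv] at h_symm
  rw [clearedDefect_eq _ _ _ _ _ hs0]
  · simp only [h_symm]
    rw [sum_watsonCoeff q s y N hq hs0 hy hsy h1 hs2 hs hqy, sub_self, mul_zero]
  · rw [h_symm]
    exact mul_ne_zero (qPochhammer_ne_zero hqy') (qPochhammer_ne_zero hqy)

end clearedSeries

/-- The ring of rational functions whose denominator is coprime to the modulus `M`. -/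
def regularSubring {F : Type*} [Field F] (M : F[X]) : Subring (RatFunc F) where
  carrier := {f | IsCoprime M f.denom}
  one_mem' := by simpa using isCoprime_one_right
  zero_mem' := by simpa using isCoprime_one_right
  mul_mem' {f g} hf hg := (IsCoprime.mul_right hf hg).of_isCoprime_of_dvd_right
    (RatFunc.denom_mul_dvd f g)
  add_mem' {f g} hf hg := (IsCoprime.mul_right hf hg).of_isCoprime_of_dvd_right
    (RatFunc.denom_add_dvd f g)
  neg_mem' {f} hf := by
    have h_dvd := RatFunc.denom_mul_dvd (algebraMap F[X] _ (-1)) f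
    rw [map_neg, map_one, neg_one_mul, ← map_one (algebraMap F[X] _), ← map_neg,
      RatFunc.denom_algebraMap, one_mul] at h_dvd
    exact IsCoprime.of_isCoprime_of_dvd_right hf h_dvd

section regularSubring

variable {F : Type*} [Field F] {M : F[X]}

lemma algebraMap_mem_regularSubring (a : F[X]) :
    algebraMap F[X] (RatFunc F) a ∈ regularSubring M := by
  change IsCoprime M (RatFunc.denom _)
  rw [RatFunc.denom_algebraMap]
  exact isCoprime_one_right

lemma inv_algebraMap_mem_regularSubring {b : F[X]} (h : IsCoprime M b) :
    (algebraMap F[X] (RatFunc F) b)⁻¹ ∈ regularSubring M := by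
  have h_dvd := RatFunc.denom_div_dvd 1 b
  rw [map_one, one_div] at h_dvd
  exact h.of_isCoprime_of_dvd_right h_dvd

lemma dvd_num_algebraMap_mul {f : RatFunc F} (hf : f ∈ regularSubring M) :
    M ∣ (algebraMap F[X] (RatFunc F) M * f).num := by
  have h_num := RatFunc.num_denom_mul (algebraMap F[X] (RatFunc F) M) f
  rw [RatFunc.denom_algebraMap, RatFunc.num_algebraMap, one_mul, mul_assoc] at h_num
  exact IsCoprime.dvd_of_dvd_mul_right hf ⟨_, h_num⟩

end regularSubring

lemma inv_qPochhammer_mem {K : Type*} [Field K] {R : Subring K} {x q : K} {k : ℕ}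
    (h : ∀ j < k, (1 - x * q ^ j)⁻¹ ∈ R) : (qPochhammer x q k)⁻¹ ∈ R := by
  rw [qPochhammer, ← prod_inv_distrib]
  exact prod_mem fun j hj => h j (mem_range.1 hj)

lemma X_zpow_ne_one {F : Type*} [Field F] {m : ℤ} (hm : m ≠ 0) :
    (RatFunc.X : RatFunc F) ^ m ≠ 1 := fun h => by
  have h_pow : (RatFunc.X : RatFunc F) ^ m.natAbs = 1 := by cases m <;> simpa using h
  rw [← RatFunc.algebraMap_X, ← map_pow, ← map_one (algebraMap F[X] _)] at h_pow
  have h_degree := congrArg natDegree (RatFunc.algebraMap_injective F h_pow)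
  rw [natDegree_X_pow, natDegree_one, Int.natAbs_eq_zero] at h_degree
  exact hm h_degree

/-- The modulus `Φ_n(-q)³ Φ_n(q)²`. -/
noncomputable def cyclotomicModulus (n : ℕ) : ℚ[X] :=
  (cyclotomic n ℚ).comp (-X) ^ 3 * cyclotomic n ℚ ^ 2

section cyclotomicModulus

variable {n : ℕ}

lemma isCoprime_cyclotomic_X_pow_sub_one {m : ℕ} (h : ¬n ∣ m) :
    IsCoprime (cyclotomic n ℚ) (X ^ m - 1) := by
  have hm : 0 < m := Nat.pos_of_ne_zero fun h0 => h (h0 ▸ dvd_zero n)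
  rw [← prod_cyclotomic_eq_X_pow_sub_one hm]
  refine IsCoprime.prod_right fun i hi => cyclotomic.isCoprime_rat ?_
  rintro rfl
  exact h (Nat.dvd_of_mem_divisors hi)

lemma isCoprime_cyclotomicModulus {P : ℚ[X]} (h : IsCoprime (cyclotomic n ℚ) P)
    (h_neg : IsCoprime (cyclotomic n ℚ) (P.comp (-X))) : IsCoprime (cyclotomicModulus n) P := by
  have h_comp := h_neg.map (compRingHom (-X))
  rw [coe_compRingHom_apply, coe_compRingHom_apply, comp_assoc, neg_comp, X_comp, neg_neg,
    comp_X] at h_comp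
  exact h_comp.pow_left.mul_left h.pow_left

lemma isCoprime_cyclotomicModulus_X_pow_sub_one (hodd : Odd n) {m : ℕ} (h : ¬n ∣ m) :
    IsCoprime (cyclotomicModulus n) (X ^ m - 1) := by
  have h_double : ¬n ∣ m * 2 := fun h2 => h (hodd.coprime_two_right.dvd_of_dvd_mul_right h2)
  refine (isCoprime_cyclotomicModulus (P := X ^ (m * 2) - 1)
    (isCoprime_cyclotomic_X_pow_sub_one h_double) ?_).of_isCoprime_of_dvd_right ?_
  · simpa [(even_two.mul_left m).neg_pow] using isCoprime_cyclotomic_X_pow_sub_one h_double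
  · rw [pow_mul]
    exact sub_one_dvd_pow_sub_one _ _

lemma isCoprime_cyclotomicModulus_X (hn : n ≠ 0) : IsCoprime (cyclotomicModulus n) X := by
  have h_coprime : IsCoprime (cyclotomic n ℚ) X := by
    obtain ⟨c, hc⟩ := cyclotomic.dvd_X_pow_sub_one n ℚ
    obtain ⟨m, rfl⟩ := Nat.exists_eq_add_one_of_ne_zero hn
    exact ⟨-c, X ^ m, by linear_combination hc⟩
  exact isCoprime_cyclotomicModulus h_coprime (by simpa using h_coprime.neg_right)

lemma X_zpow_mem_regularSubring (hn : n ≠ 0) (m : ℤ) :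
    RatFunc.X ^ m ∈ regularSubring (cyclotomicModulus n) := by
  have hX : RatFunc.X ∈ regularSubring (cyclotomicModulus n) :=
    RatFunc.algebraMap_X (K := ℚ) ▸ algebraMap_mem_regularSubring X
  have hX_inv : RatFunc.X⁻¹ ∈ regularSubring (cyclotomicModulus n) :=
    RatFunc.algebraMap_X (K := ℚ) ▸
      inv_algebraMap_mem_regularSubring (isCoprime_cyclotomicModulus_X hn)
  obtain ⟨m, rfl | rfl⟩ := m.eq_nat_or_neg
  · simpa using pow_mem hX m
  · simpa using pow_mem hX_inv m

lemma inv_one_sub_X_zpow_mem_regularSubring (hodd : Odd n) {m : ℤ} (h : ¬(n : ℤ) ∣ m) :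
    (1 - RatFunc.X ^ m)⁻¹ ∈ regularSubring (cyclotomicModulus n) := by
  have h_pow : ∀ k : ℕ, ¬n ∣ k →
      (RatFunc.X ^ k - 1)⁻¹ ∈ regularSubring (cyclotomicModulus n) := fun k hk => by
    simpa using
      inv_algebraMap_mem_regularSubring (isCoprime_cyclotomicModulus_X_pow_sub_one hodd hk)
  obtain ⟨k, rfl | rfl⟩ := m.eq_nat_or_neg
  · rw [zpow_natCast, ← neg_sub, inv_neg]
    exact neg_mem (h_pow k (by exact_mod_cast h))
  · have h_inv : 1 - (RatFunc.X : RatFunc ℚ) ^ (-k : ℤ) =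
        RatFunc.X ^ (-k : ℤ) * (RatFunc.X ^ k - 1) := by
      rw [mul_sub, zpow_neg, zpow_natCast, inv_mul_cancel₀ (pow_ne_zero _ RatFunc.X_ne_zero),
        mul_one]
    rw [h_inv, mul_inv, ← zpow_neg]
    exact mul_mem (X_zpow_mem_regularSubring hodd.pos.ne' _)
      (h_pow k (by simpa [Int.natCast_dvd_natCast] using h))

lemma inv_one_add_X_zpow_mem_regularSubring (hodd : Odd n) {m : ℤ} (h : ¬(n : ℤ) ∣ m) :
    (1 + RatFunc.X ^ m)⁻¹ ∈ regularSubring (cyclotomicModulus n) := by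
  have h_double : ¬(n : ℤ) ∣ m * 2 := fun h2 => h
    ((Nat.isCoprime_iff_coprime.2 hodd.coprime_two_right).dvd_of_dvd_mul_right h2)
  have h_ne : 1 - (RatFunc.X : RatFunc ℚ) ^ m ≠ 0 :=
    sub_ne_zero.2 (X_zpow_ne_one fun h0 => h (by simp [h0])).symm
  have h_inv : (1 + (RatFunc.X : RatFunc ℚ) ^ m)⁻¹ =
      (1 - RatFunc.X ^ m) * (1 - RatFunc.X ^ (m * 2))⁻¹ := by
    rw [zpow_mul, zpow_ofNat, show 1 - ((RatFunc.X : RatFunc ℚ) ^ m) ^ 2 =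
      (1 - RatFunc.X ^ m) * (1 + RatFunc.X ^ m) by ring, mul_inv, mul_inv_cancel_left₀ h_ne]
  rw [h_inv]
  exact mul_mem (sub_mem (one_mem _) (X_zpow_mem_regularSubring hodd.pos.ne' m))
    (inv_one_sub_X_zpow_mem_regularSubring hodd h_double)

lemma cyclotomic_comp_neg_X_dvd (hodd : Odd n) :
    (cyclotomic n ℚ).comp (-X) ∣ 1 + X ^ n := by
  have h := map_dvd (compRingHom (-X)) (cyclotomic.dvd_X_pow_sub_one n ℚ)
  simp only [coe_compRingHom_apply, sub_comp, pow_comp, X_comp, one_comp, hodd.neg_pow] at h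
  rwa [← neg_add', dvd_neg, add_comm] at h

end cyclotomicModulus

section exponents

lemma not_dvd_mul_of_abs_lt {n c m : ℤ} (h : IsCoprime n c) (hm : m ≠ 0) (hmn : |m| < n) :
    ¬n ∣ c * m := fun h_dvd =>
  hm (Int.eq_zero_of_abs_lt_dvd (h.dvd_of_dvd_mul_left h_dvd) hmn)

lemma zpow_mul_zpow_pow {K : Type*} [Field K] {x : K} (hx : x ≠ 0) (a b : ℤ) (j : ℕ) :
    x ^ a * (x ^ b) ^ j = x ^ (a + b * j) := by
  rw [← zpow_natCast, ← zpow_mul, ← zpow_add₀ hx]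

lemma zpow_two_mul_eq_sq {K : Type*} [Field K] (x : K) (m : ℤ) : x ^ (2 * m) = (x ^ m) ^ 2 := by
  rw [zpow_mul', zpow_ofNat]

lemma two_sub_add_inv {K : Type*} [Field K] {x : K} (hx : x ≠ 0) :
    2 - (x + x⁻¹) = -((x - 1) ^ 2 * x⁻¹) := by
  field_simp
  ring

lemma add_mul_ne_zero {n d N : ℕ} {r : ℤ} (hn : 0 < n) (hnd : IsCoprime (n : ℤ) d) (hNn : N < n)
    (hN : (d : ℤ) * N = n - r) (m : ℕ) : r + d * m ≠ 0 := fun h => by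
  have h_eq : (d : ℤ) * (N - m) = n := by linear_combination hN - h
  have h_pos : (0 : ℤ) < N - m := pos_of_mul_pos_right (h_eq ▸ Int.natCast_pos.2 hn) d.cast_nonneg
  exact not_dvd_mul_of_abs_lt hnd h_pos.ne' (by rw [abs_of_pos h_pos]; omega) h_eq.symm.dvd

end exponents

section congruence

variable {n d N : ℕ} {r : ℤ}

lemma X_zpow_mul_zpow_pow_ne_one {F : Type*} [Field F] {a b : ℤ} {j : ℕ} (h : a + b * j ≠ 0) :
    (RatFunc.X : RatFunc F) ^ a * (RatFunc.X ^ b) ^ j ≠ 1 := by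
  rw [zpow_mul_zpow_pow RatFunc.X_ne_zero]
  exact X_zpow_ne_one h

lemma exists_one_add_X_zpow_eq (hodd : Odd n) :
    ∃ c ∈ regularSubring (cyclotomicModulus n), 1 + (RatFunc.X : RatFunc ℚ) ^ (n : ℤ) =
      algebraMap ℚ[X] (RatFunc ℚ) ((cyclotomic n ℚ).comp (-X)) * c := by
  obtain ⟨c, hc⟩ := cyclotomic_comp_neg_X_dvd hodd
  exact ⟨_, algebraMap_mem_regularSubring c, by simp [← map_mul, ← hc]⟩

lemma exists_X_zpow_sub_one_eq :
    ∃ c ∈ regularSubring (cyclotomicModulus n), (RatFunc.X : RatFunc ℚ) ^ (n : ℤ) - 1 =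
      algebraMap ℚ[X] (RatFunc ℚ) (cyclotomic n ℚ) * c := by
  obtain ⟨c, hc⟩ := cyclotomic.dvd_X_pow_sub_one n ℚ
  exact ⟨_, algebraMap_mem_regularSubring c, by simp [← map_mul, ← hc]⟩

lemma exists_one_sub_div_eq (hodd : Odd n) (hnd : IsCoprime (n : ℤ) d) {m : ℤ} (hm : |m| < n) :
    ∃ c ∈ regularSubring (cyclotomicModulus n),
      (1 - (RatFunc.X ^ (n : ℤ)) ^ 2) / (1 - RatFunc.X ^ (n + d * m)) =
        algebraMap ℚ[X] (RatFunc ℚ) ((cyclotomic n ℚ).comp (-X)) * c := by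
  obtain ⟨c, hc, h_eq⟩ := exists_one_add_X_zpow_eq hodd
  have h_factor : 1 - ((RatFunc.X : RatFunc ℚ) ^ (n : ℤ)) ^ 2 =
      (1 + RatFunc.X ^ (n : ℤ)) * (1 - RatFunc.X ^ (n : ℤ)) := by ring
  rw [h_factor, mul_div_assoc, h_eq]
  rcases eq_or_ne m 0 with rfl | hm0
  · have h_ne : 1 - (RatFunc.X : RatFunc ℚ) ^ (n : ℤ) ≠ 0 :=
      sub_ne_zero.2 (X_zpow_ne_one (by exact_mod_cast hodd.pos.ne')).symm
    exact ⟨c, hc, by rw [mul_zero, add_zero, div_self h_ne, mul_one]⟩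
  · refine ⟨c * ((1 - RatFunc.X ^ (n : ℤ)) * (1 - RatFunc.X ^ (n + d * m))⁻¹), mul_mem hc <|
      mul_mem (sub_mem (one_mem _) (X_zpow_mem_regularSubring hodd.pos.ne' _)) ?_,
      by rw [div_eq_mul_inv]; ring⟩
    refine inv_one_sub_X_zpow_mem_regularSubring hodd ?_
    rw [dvd_add_right dvd_rfl]
    exact not_dvd_mul_of_abs_lt hnd hm0 hm

lemma inv_qPochhammer_mem_regularSubring (hodd : Odd n) {a b : ℤ} {k : ℕ}
    (h : ∀ j < k, ¬(n : ℤ) ∣ a + b * j) :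
    (qPochhammer (RatFunc.X ^ a) (RatFunc.X ^ b) k)⁻¹ ∈ regularSubring (cyclotomicModulus n) :=
  inv_qPochhammer_mem fun j hj => by
    rw [zpow_mul_zpow_pow RatFunc.X_ne_zero]
    exact inv_one_sub_X_zpow_mem_regularSubring hodd (h j hj)

lemma isCoprime_two_mul (hodd : Odd n) (hnd : IsCoprime (n : ℤ) d) : IsCoprime (n : ℤ) (2 * d) :=
  (Nat.isCoprime_iff_coprime.2 hodd.coprime_two_right).mul_right hnd

lemma inv_qPochhammer_self_mem_regularSubring (hodd : Odd n) (hnd : IsCoprime (n : ℤ) d)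
    {k : ℕ} (hk : k < n) :
    (qPochhammer (RatFunc.X ^ (2 * d : ℤ)) (RatFunc.X ^ (2 * d : ℤ)) k)⁻¹ ∈
      regularSubring (cyclotomicModulus n) :=
  inv_qPochhammer_mem_regularSubring hodd fun j hj => by
    rw [← mul_one_add]
    exact not_dvd_mul_of_abs_lt (isCoprime_two_mul hodd hnd) (by omega) (by rw [abs_lt]; omega)

lemma exists_watsonCoeff_eq (hodd : Odd n) (hnd : IsCoprime (n : ℤ) d)
    (hNn : N < n) (hN : (d : ℤ) * N = n - r) {k : ℕ} (hk : k ≤ N) :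
    ∃ c ∈ regularSubring (cyclotomicModulus n),
      watsonCoeff (RatFunc.X ^ (2 * d : ℤ)) (RatFunc.X ^ r) (RatFunc.X ^ (n : ℤ)) N k =
        algebraMap ℚ[X] (RatFunc ℚ) ((cyclotomic n ℚ).comp (-X)) * c := by
  obtain ⟨c, hc, h_eq⟩ := exists_one_sub_div_eq (m := 2 * k - N) hodd hnd (by rw [abs_lt]; omega)
  have h_zpow := X_zpow_mem_regularSubring hodd.pos.ne'
  have h_inv : (qPochhammer ((RatFunc.X ^ r) ^ 2) (RatFunc.X ^ (2 * d : ℤ)) k)⁻¹ ∈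
      regularSubring (cyclotomicModulus n) := by
    rw [← zpow_two_mul_eq_sq]
    refine inv_qPochhammer_mem_regularSubring hodd fun j hj => ?_
    rw [show 2 * r + 2 * d * (j : ℤ) = 2 * n + 2 * d * (j - N) by linear_combination 2 * hN,
      dvd_add_right (dvd_mul_left _ _)]
    exact not_dvd_mul_of_abs_lt (isCoprime_two_mul hodd hnd) (by omega) (by rw [abs_lt]; omega)
  have h_exponent : (n : ℤ) + d * (2 * k - N) = r + 2 * d * k := by linear_combination -hN
  rw [h_exponent, ← zpow_mul_zpow_pow RatFunc.X_ne_zero] at h_eq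
  refine ⟨c * ((-1) ^ N * ((RatFunc.X ^ (n : ℤ)) ^ 2) ^ N *
    (RatFunc.X ^ (-(2 * d) : ℤ)) ^ (N + 1).choose 2 *
    (RatFunc.X ^ (2 * d : ℤ) * (RatFunc.X ^ (-r)) ^ 2) ^ k *
    ((qPochhammer (RatFunc.X ^ (2 * d : ℤ)) (RatFunc.X ^ (2 * d : ℤ)) k)⁻¹ *
      (qPochhammer ((RatFunc.X ^ r) ^ 2) (RatFunc.X ^ (2 * d : ℤ)) k)⁻¹)), ?_, ?_⟩
  · have h_sign := pow_mem (neg_mem (one_mem (regularSubring (cyclotomicModulus n)))) N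
    exact mul_mem hc <| mul_mem (mul_mem (mul_mem (mul_mem h_sign
      (pow_mem (pow_mem (h_zpow _) _) _)) (pow_mem (h_zpow _) _))
      (pow_mem (mul_mem (h_zpow _) (pow_mem (h_zpow _) _)) _))
      (mul_mem (inv_qPochhammer_self_mem_regularSubring hodd hnd (by omega)) h_inv)
  · rw [watsonCoeff, ← mul_assoc, ← h_eq, zpow_neg, zpow_neg]
    simp only [div_eq_mul_inv, mul_inv, inv_pow]
    ring

lemma exists_two_sub_eq (hodd : Odd n) :
    ∃ c ∈ regularSubring (cyclotomicModulus n),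
      2 - ((RatFunc.X ^ (n : ℤ)) ^ 2 + ((RatFunc.X ^ (n : ℤ)) ^ 2)⁻¹) =
        algebraMap ℚ[X] (RatFunc ℚ) ((cyclotomic n ℚ).comp (-X) * cyclotomic n ℚ) ^ 2 * c := by
  obtain ⟨a, ha, ha_eq⟩ := exists_one_add_X_zpow_eq hodd
  obtain ⟨b, hb, hb_eq⟩ := exists_X_zpow_sub_one_eq (n := n)
  have hX : (RatFunc.X : RatFunc ℚ) ^ (n : ℤ) ≠ 0 := zpow_ne_zero _ RatFunc.X_ne_zero
  refine ⟨-((a * b) ^ 2 * (RatFunc.X ^ (-n : ℤ)) ^ 2), neg_mem (mul_mem (pow_mem (mul_mem ha hb) 2)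
    (pow_mem (X_zpow_mem_regularSubring hodd.pos.ne' _) 2)), ?_⟩
  have h_factor : ((RatFunc.X : RatFunc ℚ) ^ (n : ℤ)) ^ 2 - 1 =
      (1 + RatFunc.X ^ (n : ℤ)) * (RatFunc.X ^ (n : ℤ) - 1) := by ring
  rw [two_sub_add_inv (pow_ne_zero 2 hX), h_factor, ha_eq, hb_eq, zpow_neg, inv_pow, map_mul]
  ring

lemma X_zpow_mul_zpow_two_mul_pow_ne_one (hn : 0 < n) (hnd : IsCoprime (n : ℤ) d) (hNn : N < n)
    (hN : (d : ℤ) * N = n - r) (j : ℕ) :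
    (RatFunc.X : RatFunc ℚ) ^ r * (RatFunc.X ^ (2 * d : ℤ)) ^ j ≠ 1 :=
  X_zpow_mul_zpow_pow_ne_one fun h => add_mul_ne_zero hn hnd hNn hN (2 * j) <| by
    push_cast
    linear_combination h

lemma X_zpow_sq_mul_zpow_two_mul_pow_ne_one (hn : 0 < n) (hnd : IsCoprime (n : ℤ) d) (hNn : N < n)
    (hN : (d : ℤ) * N = n - r) (j : ℕ) :
    ((RatFunc.X : RatFunc ℚ) ^ r) ^ 2 * (RatFunc.X ^ (2 * d : ℤ)) ^ j ≠ 1 := by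
  rw [← zpow_two_mul_eq_sq]
  exact X_zpow_mul_zpow_pow_ne_one fun h => add_mul_ne_zero hn hnd hNn hN j (by linarith)

lemma clearedDefect_X_zpow_eq_zero (hn : 0 < n) (hd : 0 < d) (hnd : IsCoprime (n : ℤ) d)
    (hNn : N < n) (hN : (d : ℤ) * N = n - r) :
    clearedDefect (RatFunc.X ^ r : RatFunc ℚ) (RatFunc.X ^ (2 * d : ℤ))
      ((RatFunc.X ^ (n : ℤ)) ^ 2 + ((RatFunc.X ^ (n : ℤ)) ^ 2)⁻¹)
      (watsonCoeff (RatFunc.X ^ (2 * d : ℤ)) (RatFunc.X ^ r) (RatFunc.X ^ (n : ℤ)) N) N = 0 := by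
  have hX : (RatFunc.X : RatFunc ℚ) ≠ 0 := RatFunc.X_ne_zero
  refine clearedDefect_watsonCoeff_eq_zero _ _ _ N (zpow_ne_zero _ hX) (zpow_ne_zero _ hX)
    (zpow_ne_zero _ hX) ?_ (fun j => X_zpow_mul_zpow_pow_ne_one (by positivity))
    (X_zpow_sq_mul_zpow_two_mul_pow_ne_one hn hnd hNn hN)
    (X_zpow_mul_zpow_two_mul_pow_ne_one hn hnd hNn hN) (fun j hj => ?_) fun j _ => ?_
  · rw [← zpow_two_mul_eq_sq, ← zpow_two_mul_eq_sq, zpow_mul_zpow_pow hX]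
    congr 1
    linear_combination 2 * hN
  · rw [← zpow_two_mul_eq_sq, ← zpow_sub₀ hX]
    exact X_zpow_mul_zpow_pow_ne_one fun h =>
      not_dvd_mul_of_abs_lt (m := j + 1) hnd (by omega) (by rw [abs_of_pos] <;> omega)
        ⟨1, by linarith⟩
  · rw [← zpow_two_mul_eq_sq, ← zpow_add₀ hX]
    exact X_zpow_mul_zpow_pow_ne_one (by positivity)

lemma exists_clearedDefect_two_eq (hodd : Odd n) (hd : 0 < d) (hnd : IsCoprime (n : ℤ) d)
    (hNn : N < n) (hN : (d : ℤ) * N = n - r) :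
    ∃ c ∈ regularSubring (cyclotomicModulus n),
      clearedDefect (RatFunc.X ^ r) (RatFunc.X ^ (2 * d : ℤ)) 2
        (watsonCoeff (RatFunc.X ^ (2 * d : ℤ)) (RatFunc.X ^ r) (RatFunc.X ^ (n : ℤ)) N) N =
      algebraMap ℚ[X] (RatFunc ℚ) (cyclotomicModulus n) * c := by
  have h_zpow := X_zpow_mem_regularSubring hodd.pos.ne'
  have h_root := clearedDefect_X_zpow_eq_zero hodd.pos hd hnd hNn hN
  have h_coeff := fun k hk => exists_watsonCoeff_eq (k := k) hodd hnd hNn hN hk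
  have h_one_add := exists_one_add_X_zpow_eq hodd
  rw [show (n : ℤ) = r + d * N by linear_combination -hN,
    ← zpow_mul_zpow_pow RatFunc.X_ne_zero] at h_one_add
  have h_inv_mem : ((RatFunc.X ^ (n : ℤ)) ^ 2)⁻¹ ∈ regularSubring (cyclotomicModulus n) := by
    rw [← inv_pow, ← zpow_neg]
    exact pow_mem (h_zpow _) 2
  generalize watsonCoeff ((RatFunc.X : RatFunc ℚ) ^ (2 * d : ℤ)) (RatFunc.X ^ r)
    (RatFunc.X ^ (n : ℤ)) N = g at h_root h_coeff ⊢
  rw [zpow_two_mul_eq_sq RatFunc.X (d : ℤ)] at h_root ⊢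
  obtain ⟨a, ha, ha_eq⟩ := exists_clearedDefect_eq_mul (v := 2)
    (algebraMap_mem_regularSubring _) (h_zpow r) (h_zpow d) (ofNat_mem _ 2)
    (add_mem (pow_mem (h_zpow n) 2) h_inv_mem) h_one_add h_coeff h_root
  obtain ⟨b, hb, hb_eq⟩ := exists_two_sub_eq hodd
  refine ⟨b * a, mul_mem hb ha, ?_⟩
  rw [ha_eq, hb_eq, cyclotomicModulus]
  simp only [map_mul, map_pow]
  ring

lemma clearedDefect_watsonCoeff_zero {K : Type*} [Field K] {s : K} (q u : K) (hs : s ≠ 1) :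
    clearedDefect s q u (watsonCoeff q s s 0) 0 = 0 := by
  have h_ne : 1 - s ≠ 0 := sub_ne_zero.2 hs.symm
  simp only [clearedDefect, clearedSeries, watsonCoeff, symmPochhammer_zero, qPochhammer_zero,
    zero_add, range_one, sum_singleton, zero_tsub, pow_zero, mul_one, one_mul,
    Nat.choose_zero_succ, Nat.choose_succ_self, add_zero, div_one]
  field_simp
  ring

lemma cyclotomicModulus_dvd_num (hodd : Odd n) (hd : 0 < d) (hnd : IsCoprime (n : ℤ) d)
    (hNn : N < n) (hN : (d : ℤ) * N = n - r) :
    cyclotomicModulus n ∣ ((1 + (RatFunc.X : RatFunc ℚ) ^ r)⁻¹ *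
      (∑ k ∈ range (N + 1), (-1) ^ k * (1 + RatFunc.X ^ r * (RatFunc.X ^ (2 * d : ℤ)) ^ k) *
          (RatFunc.X ^ (2 * d : ℤ)) ^ k.choose 2 * (RatFunc.X ^ (2 * d : ℤ) / RatFunc.X ^ r) ^ k *
          (qPochhammer ((RatFunc.X ^ r) ^ 2) (RatFunc.X ^ (2 * d : ℤ)) k ^ 2 /
            qPochhammer (RatFunc.X ^ (2 * d : ℤ)) (RatFunc.X ^ (2 * d : ℤ)) k ^ 2) -
        ∑ k ∈ range (N + 1),
          watsonCoeff (RatFunc.X ^ (2 * d : ℤ)) (RatFunc.X ^ r) (RatFunc.X ^ (n : ℤ)) N k *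
            qPochhammer ((RatFunc.X ^ r) ^ 2) (RatFunc.X ^ (2 * d : ℤ)) k ^ 2)).num := by
  have h_zpow := X_zpow_mem_regularSubring hodd.pos.ne'
  have hs0 : (RatFunc.X : RatFunc ℚ) ^ r ≠ 0 := zpow_ne_zero _ RatFunc.X_ne_zero
  have hp : qPochhammer (RatFunc.X ^ (2 * d : ℤ)) (RatFunc.X ^ (2 * d : ℤ)) N ≠
      (0 : RatFunc ℚ) :=
    qPochhammer_ne_zero fun j _ => X_zpow_mul_zpow_pow_ne_one (by positivity)
  have h_defect := clearedDefect_eq (RatFunc.X ^ r) (RatFunc.X ^ (2 * d : ℤ)) 2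
    (watsonCoeff (RatFunc.X ^ (2 * d : ℤ)) (RatFunc.X ^ r) (RatFunc.X ^ (n : ℤ)) N) N hs0
    (by rw [symmPochhammer_two]; exact pow_ne_zero 2 hp)
  simp only [symmPochhammer_two] at h_defect
  rw [← inv_mul_eq_iff_eq_mul₀ (mul_ne_zero (pow_ne_zero N hs0) (pow_ne_zero 2 hp))] at h_defect
  rw [← h_defect]
  rcases N.eq_zero_or_pos with rfl | hN0
  · obtain rfl : r = n := by simpa [sub_eq_zero, eq_comm] using hN
    rw [clearedDefect_watsonCoeff_zero _ _ (X_zpow_ne_one (by exact_mod_cast hodd.pos.ne')),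
      mul_zero, mul_zero, RatFunc.num_zero]
    exact dvd_zero _
  · have h_not_dvd : ¬(n : ℤ) ∣ r := by
      rw [show r = n - d * (N : ℤ) by linear_combination hN, dvd_sub_right dvd_rfl]
      exact not_dvd_mul_of_abs_lt hnd (by omega) (by rw [abs_lt]; omega)
    obtain ⟨c, hc, h_eq⟩ := exists_clearedDefect_two_eq hodd hd hnd hNn hN
    rw [h_eq, mul_inv, ← inv_pow, ← inv_pow, ← zpow_neg, mul_left_comm _ (algebraMap _ _ _),
      mul_left_comm _ (algebraMap _ _ _)]
    exact dvd_num_algebraMap_mul <| mul_mem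
      (inv_one_add_X_zpow_mem_regularSubring hodd h_not_dvd) <| mul_mem (mul_mem
        (pow_mem (h_zpow _) N) (pow_mem (inv_qPochhammer_self_mem_regularSubring hodd hnd hNn) 2))
        hc

end congruence

lemma left_summand_eq (d k : ℕ) (r : ℤ) :
    (-1 : RatFunc ℚ) ^ k * ((1 + RatFunc.X ^ (2 * (d : ℤ) * k + r)) *
          qPoch (RatFunc.X ^ (2 * r)) (RatFunc.X ^ (2 * (d : ℤ))) k ^ 2) /
        ((1 + RatFunc.X ^ r) *
          qPoch (RatFunc.X ^ (2 * (d : ℤ))) (RatFunc.X ^ (2 * (d : ℤ))) k ^ 2) *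
        RatFunc.X ^ ((d : ℤ) * (k : ℤ) ^ 2 + (k : ℤ) * ((d : ℤ) - r)) =
      (1 + RatFunc.X ^ r)⁻¹ * ((-1) ^ k * (1 + RatFunc.X ^ r * (RatFunc.X ^ (2 * d : ℤ)) ^ k) *
        (RatFunc.X ^ (2 * d : ℤ)) ^ k.choose 2 * (RatFunc.X ^ (2 * d : ℤ) / RatFunc.X ^ r) ^ k *
        (qPochhammer ((RatFunc.X ^ r) ^ 2) (RatFunc.X ^ (2 * d : ℤ)) k ^ 2 /
          qPochhammer (RatFunc.X ^ (2 * d : ℤ)) (RatFunc.X ^ (2 * d : ℤ)) k ^ 2)) := by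
  have hX : (RatFunc.X : RatFunc ℚ) ≠ 0 := RatFunc.X_ne_zero
  have h_choose : (2 * k.choose 2 + k : ℤ) = k * k := mod_cast two_mul_choose_two_add k
  have h_power : (RatFunc.X : RatFunc ℚ) ^ ((d : ℤ) * (k : ℤ) ^ 2 + (k : ℤ) * ((d : ℤ) - r)) =
      (RatFunc.X ^ (2 * d : ℤ)) ^ k.choose 2 * (RatFunc.X ^ (2 * d : ℤ) / RatFunc.X ^ r) ^ k := by
    rw [← zpow_sub₀ hX, ← zpow_natCast _ (k.choose 2), ← zpow_mul, zpow_mul_zpow_pow hX]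
    congr 1
    linear_combination -d * h_choose
  rw [h_power, zpow_two_mul_eq_sq _ r, add_comm _ r, ← zpow_mul_zpow_pow hX]
  simp only [qPoch, qPochhammer, div_eq_mul_inv, mul_inv]
  ring

lemma qInt_div_qInt (m r : ℤ) : qInt (RatFunc.X ^ (2 : ℤ)) m / qInt (RatFunc.X ^ (2 : ℤ)) r =
    (1 - (RatFunc.X ^ m) ^ 2) / (1 - (RatFunc.X ^ r) ^ 2) := by
  have h_ne : 1 - (RatFunc.X : RatFunc ℚ) ^ (2 : ℤ) ≠ 0 :=
    sub_ne_zero.2 (X_zpow_ne_one two_ne_zero).symm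
  simp only [qInt]
  rw [div_div_div_cancel_right₀ h_ne, zpow_comm, zpow_comm _ 2 r, zpow_ofNat, zpow_ofNat]

lemma X_zpow_ediv_eq_div {n d N : ℕ} {r : ℤ} (hd : 0 < d) (hN : (d : ℤ) * N = n - r) :
    (RatFunc.X : RatFunc ℚ) ^ (((n : ℤ) - r) * ((n : ℤ) + r - d) / d) =
      ((RatFunc.X ^ (n : ℤ)) ^ 2) ^ N / (RatFunc.X ^ (2 * d : ℤ)) ^ (N + 1).choose 2 := by
  have h_choose : (2 * (N + 1).choose 2 + (N + 1) : ℤ) = (N + 1) * (N + 1) :=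
    mod_cast two_mul_choose_two_add (N + 1)
  rw [← pow_mul, ← zpow_natCast, ← zpow_natCast, ← zpow_mul, ← zpow_mul,
    ← zpow_sub₀ RatFunc.X_ne_zero, ← hN, mul_assoc, Int.mul_ediv_cancel_left _ (by omega)]
  congr 1
  push_cast
  linear_combination N * hN + d * h_choose

lemma right_summand_eq {n d N : ℕ} {r : ℤ} (hn : 0 < n) (hd : 0 < d)
    (hnd : IsCoprime (n : ℤ) d) (hNn : N < n) (hN : (d : ℤ) * N = n - r) (k : ℕ) :
    (-1 : RatFunc ℚ) ^ N * (qInt (RatFunc.X ^ (2 : ℤ)) (n : ℤ) / qInt (RatFunc.X ^ (2 : ℤ)) r) *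
        RatFunc.X ^ (((n : ℤ) - r) * ((n : ℤ) + r - d) / d) *
        (qPoch (RatFunc.X ^ (2 * r)) (RatFunc.X ^ (2 * (d : ℤ))) k *
          qPoch (RatFunc.X ^ r) (RatFunc.X ^ (2 * (d : ℤ))) k /
          (qPoch (RatFunc.X ^ (2 * (d : ℤ))) (RatFunc.X ^ (2 * (d : ℤ))) k *
            qPoch (RatFunc.X ^ (2 * (d : ℤ) + r)) (RatFunc.X ^ (2 * (d : ℤ))) k) *
          RatFunc.X ^ (2 * (k : ℤ) * ((d : ℤ) - r))) =
      (1 + RatFunc.X ^ r)⁻¹ *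
        (watsonCoeff (RatFunc.X ^ (2 * d : ℤ)) (RatFunc.X ^ r) (RatFunc.X ^ (n : ℤ)) N k *
          qPochhammer ((RatFunc.X ^ r) ^ 2) (RatFunc.X ^ (2 * d : ℤ)) k ^ 2) := by
  have hX : (RatFunc.X : RatFunc ℚ) ≠ 0 := RatFunc.X_ne_zero
  have hs := X_zpow_mul_zpow_two_mul_pow_ne_one hn hnd hNn hN
  have h_power : (RatFunc.X : RatFunc ℚ) ^ (2 * (k : ℤ) * ((d : ℤ) - r)) =
      (RatFunc.X ^ (2 * d : ℤ) / (RatFunc.X ^ r) ^ 2) ^ k := by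
    rw [← zpow_two_mul_eq_sq, ← zpow_sub₀ hX, ← zpow_natCast, ← zpow_mul]
    congr 1
    ring
  have h_ratio := qPochhammer_div_qPochhammer_mul (k := k) fun j _ => hs j
  have h_factor : 1 - ((RatFunc.X : RatFunc ℚ) ^ r) ^ 2 =
      (1 - RatFunc.X ^ r) * (1 + RatFunc.X ^ r) := by ring
  have h_cancel : (1 - (RatFunc.X : RatFunc ℚ) ^ r) ≠ 0 :=
    sub_ne_zero.2 (by simpa using (hs 0).symm)
  have h_pochhammer : qPochhammer ((RatFunc.X ^ r) ^ 2) (RatFunc.X ^ (2 * d : ℤ)) k ≠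
      (0 : RatFunc ℚ) :=
    qPochhammer_ne_zero fun j _ => X_zpow_sq_mul_zpow_two_mul_pow_ne_one hn hnd hNn hN j
  have h_base : (RatFunc.X : RatFunc ℚ) ^ (2 * d + r : ℤ) =
      RatFunc.X ^ r * RatFunc.X ^ (2 * d : ℤ) := by
    rw [add_comm, zpow_add₀ hX]
  change _ * (qPochhammer _ _ k * qPochhammer _ _ k / (qPochhammer _ _ k * qPochhammer _ _ k) * _) =
    _
  rw [qInt_div_qInt, X_zpow_ediv_eq_div hd hN, h_power, h_base, zpow_two_mul_eq_sq _ r,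
    mul_div_mul_comm, h_ratio, watsonCoeff, h_factor]
  generalize qPochhammer (((RatFunc.X : RatFunc ℚ) ^ r) ^ 2) (RatFunc.X ^ (2 * d : ℤ)) k = A
    at h_pochhammer ⊢
  simp only [div_eq_mul_inv, mul_inv]
  field_simp

theorem stmt3 (n d : ℕ) (r : ℤ) (hpos : 0 < n) (hodd : Odd n) (hd : 0 < d)
    (hgcd : Nat.gcd n d = 1)
    (hr1 : (n : ℤ) - d * n + d ≤ r) (hr2 : r ≤ (n : ℤ))
    (hnr : (n : ℤ) ≡ r [ZMOD (d : ℤ)]) :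
    ((cyclotomic n ℚ).comp (-X)) ^ 3 * (cyclotomic n ℚ) ^ 2 ∣
      RatFunc.num
        ((∑ k ∈ Finset.range ((((n : ℤ) - r) / d).toNat + 1),
            (-1 : RatFunc ℚ) ^ k *
              ((1 + RatFunc.X ^ (2 * (d : ℤ) * k + r)) *
                qPoch (RatFunc.X ^ (2 * r)) (RatFunc.X ^ (2 * (d : ℤ))) k ^ 2) /
              ((1 + RatFunc.X ^ r) *
                qPoch (RatFunc.X ^ (2 * (d : ℤ))) (RatFunc.X ^ (2 * (d : ℤ))) k ^ 2) *
              RatFunc.X ^ ((d : ℤ) * (k : ℤ) ^ 2 + (k : ℤ) * ((d : ℤ) - r))) -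
          (-1 : RatFunc ℚ) ^ (((n : ℤ) - r) / d).toNat *
            (qInt (RatFunc.X ^ (2 : ℤ)) (n : ℤ) / qInt (RatFunc.X ^ (2 : ℤ)) r) *
            RatFunc.X ^ (((n : ℤ) - r) * ((n : ℤ) + r - d) / d) *
            ∑ k ∈ Finset.range ((((n : ℤ) - r) / d).toNat + 1),
              qPoch (RatFunc.X ^ (2 * r)) (RatFunc.X ^ (2 * (d : ℤ))) k *
                qPoch (RatFunc.X ^ r) (RatFunc.X ^ (2 * (d : ℤ))) k /
                (qPoch (RatFunc.X ^ (2 * (d : ℤ))) (RatFunc.X ^ (2 * (d : ℤ))) k *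
                  qPoch (RatFunc.X ^ (2 * (d : ℤ) + r)) (RatFunc.X ^ (2 * (d : ℤ))) k) *
                RatFunc.X ^ (2 * (k : ℤ) * ((d : ℤ) - r))) := by
  have hd0 : (0 : ℤ) < d := mod_cast hd
  obtain ⟨t, ht⟩ := hnr.symm.dvd
  lift t to ℕ using nonneg_of_mul_nonneg_right (ht ▸ sub_nonneg.2 hr2) hd0
  have hNn : t < n := by
    have h_le : (d : ℤ) * t ≤ d * (n - 1) := by linear_combination hr1 - ht
    have := le_of_mul_le_mul_left h_le hd0
    omega
  have hnd : IsCoprime (n : ℤ) d := Nat.isCoprime_iff_coprime.2 hgcd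
  have h_toNat : (((n : ℤ) - r) / d).toNat = t := by
    rw [ht, Int.mul_ediv_cancel_left _ hd0.ne', Int.toNat_natCast]
  rw [h_toNat, mul_sum, sum_congr rfl fun k _ => left_summand_eq d k r,
    sum_congr rfl fun k _ => right_summand_eq hpos hd hnd hNn ht.symm k, ← mul_sum, ← mul_sum,
    ← mul_sub]
  exact cyclotomicModulus_dvd_num hodd hd hnd hNn ht.symm
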